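/- Every oriented graph G⃗ is k-mixing for every integer k ≥ δ*_max(G⃗) + 1, where δ*_max denotes the max-degeneracy. -/

import Mathlib

/-- A relation (digraph) is acyclic if no vertex lies on a directed cycle. -/
def RelAcyclic {V : Type} (r : V → V → Prop) : Prop :=
  ∀ v, ¬ Relation.TransGen r v v

/-- `α` is a `k`-dicolouring of the digraph `D`: each colour class induces
an acyclic subdigraph. -/
def IsDicolouring {V : Type} (D : V → V → Prop) (k : ℕ) (α : V → Fin k) : Prop :=
  ∀ c : Fin k, RelAcyclic (fun u v => D u v ∧ α u = c ∧ α v = c)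

/-- Two colourings differ on exactly one vertex. -/
def RecolAdj {V : Type} {k : ℕ} (α β : V → Fin k) : Prop :=
  ∃ v, α v ≠ β v ∧ ∀ w, w ≠ v → α w = β w

/-- A single edge of the `k`-dicolouring graph `D_k(D)`. -/
def RecolStep {V : Type} (D : V → V → Prop) (k : ℕ) (α β : V → Fin k) : Prop :=
  IsDicolouring D k α ∧ IsDicolouring D k β ∧ RecolAdj α β

/-- The digraph `D` is `k`-mixing: the `k`-dicolouring graph is connected. -/
def Mixing {V : Type} (D : V → V → Prop) (k : ℕ) : Prop :=
  ∀ α β : V → Fin k, IsDicolouring D k α → IsDicolouring D k β →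
    Relation.ReflTransGen (RecolStep D k) α β

/-- Out-degree of `v` in the subdigraph of `D` induced by `S`. -/
noncomputable def outDegOn {V : Type} (D : V → V → Prop) (S : Set V) (v : V) : ℕ :=
  {w ∈ S | D v w}.ncard

/-- In-degree of `v` in the subdigraph of `D` induced by `S`. -/
noncomputable def inDegOn {V : Type} (D : V → V → Prop) (S : Set V) (v : V) : ℕ :=
  {w ∈ S | D w v}.ncard

/-- An oriented graph: a digraph with no digon (hence also no loop). -/
def Oriented {V : Type} (D : V → V → Prop) : Prop :=
  ∀ u v, D u v → ¬ D v u

/-- A walk of length `m` in the `k`-dicolouring graph (a redicolouring sequence):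
consecutive dicolourings differ on exactly one vertex. -/
def RecolWalk {V : Type} (D : V → V → Prop) (k m : ℕ) (γ : ℕ → V → Fin k) : Prop :=
  (∀ i ≤ m, IsDicolouring D k (γ i)) ∧ ∀ i < m, RecolAdj (γ i) (γ (i + 1))

/-- A frozen `k`-dicolouring: no single vertex can be recoloured so as to
yield another `k`-dicolouring. -/
def FrozenDicolouring {V : Type} [DecidableEq V] (D : V → V → Prop) (k : ℕ)
    (α : V → Fin k) : Prop :=
  IsDicolouring D k α ∧
    ∀ (v : V) (c : Fin k), c ≠ α v → ¬ IsDicolouring D k (Function.update α v c)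

/-- The arc set of a digraph, as a set of ordered pairs. -/
def arcSet {V : Type} (D : V → V → Prop) : Set (V × V) := {p | D p.1 p.2}

/-- The arcs of `D` lying inside a set `S` of vertices. -/
def arcSetOn {V : Type} (D : V → V → Prop) (S : Set V) : Set (V × V) :=
  {p | p.1 ∈ S ∧ p.2 ∈ S ∧ D p.1 p.2}

/-!
Remove the arcs at a vertex `v` whose in- and out-degree are both less than `k`, and suppose that
what remains is `k`-mixing. A redicolouring sequence of the remainder lifts to one of `D`: before a
vertex `w` is recoloured, recolour `v` with a colour missing from its out-neighbourhood, or, if `w`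
is an out-neighbour of `v`, from its in-neighbourhood. As there is no digon, `w` does not lie in the
neighbourhood that was avoided, so no monochromatic cycle passes through `v` before or after the
recolouring of `w`. Degeneracy provides such a vertex in every nonempty induced subdigraph, so its
vertices can be restored one at a time.
-/

theorem exists_notMem_image_of_encard_lt {ι κ : Type*} (f : ι → κ) {s : Set ι}
    (hs : s.encard < ENat.card κ) : ∃ c, c ∉ f '' s := by
  rw [← Set.ne_univ_iff_exists_notMem]
  intro h
  have := Set.encard_image_le f s
  rw [h, Set.encard_univ] at this
  exact this.not_gt hs

theorem Oriented.irrefl {V : Type} {D : V → V → Prop} (hD : Oriented D) (v : V) : ¬ D v v :=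
  fun h => hD v v h h

section InducedOn

/-- The subdigraph of `D` induced by `S`, encoded as a spanning subdigraph of `D` on the same
vertex type: the vertices outside `S` remain, but are isolated. -/
def inducedOn {V : Type} (D : V → V → Prop) (S : Set V) : V → V → Prop :=
  fun a b => D a b ∧ a ∈ S ∧ b ∈ S

variable {V : Type} {D : V → V → Prop}

theorem inducedOn_le (S : Set V) : inducedOn D S ≤ D := fun _ _ h => h.1

theorem inducedOn_univ : inducedOn D Set.univ = D := by
  ext
  simp [inducedOn]

theorem inducedOn_inducedOn (S T : Set V) :
    inducedOn (inducedOn D S) T = inducedOn D (S ∩ T) := by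
  grind [inducedOn]

theorem Oriented.inducedOn (hD : Oriented D) (S : Set V) : Oriented (inducedOn D S) :=
  fun _ _ h h' => hD _ _ h.1 h'.1

end InducedOn

section Acyclic

variable {V : Type} {r s : V → V → Prop} {v : V}

theorem RelAcyclic.mono (hs : RelAcyclic s) (h : r ≤ s) : RelAcyclic r :=
  fun v hv => hs v (Relation.TransGen.mono h _ _ hv)

theorem RelAcyclic.swap (hr : RelAcyclic r) : RelAcyclic (Function.swap r) :=
  fun v hv => hr v (Relation.transGen_swap.1 hv)

theorem RelAcyclic.of_inducedOn_compl_of_sink (h : RelAcyclic (inducedOn r {v}ᶜ))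
    (hv : ∀ w, ¬ r v w) : RelAcyclic r := by
  have source_ne {a b} (hab : r a b) : a ≠ v := fun hav => hv b (hav ▸ hab)
  have path_avoids {a b} (hab : Relation.TransGen r a b) (hb : b ≠ v) :
      Relation.TransGen (inducedOn r {v}ᶜ) a b := by
    induction hab with
    | single hab => exact .single ⟨hab, source_ne hab, hb⟩
    | tail _ hbc ih => exact .tail (ih (source_ne hbc)) ⟨hbc, source_ne hbc, hb⟩
  intro u hu
  obtain ⟨w, huw, -⟩ := Relation.TransGen.head'_iff.1 hu
  exact h u (path_avoids hu (source_ne huw))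

end Acyclic

section Dicolouring

variable {V : Type} {D D' : V → V → Prop} {k : ℕ} {α β : V → Fin k} {v : V}

theorem isDicolouring_of_forall_not (hD : ∀ a b, ¬ D a b) (α : V → Fin k) :
    IsDicolouring D k α := by
  intro c u hu
  obtain ⟨w, huw, -⟩ := Relation.TransGen.head'_iff.1 hu
  exact hD u w huw.1

theorem IsDicolouring.mono (hα : IsDicolouring D k α) (h : D' ≤ D) : IsDicolouring D' k α :=
  fun c => (hα c).mono fun _ _ hab => ⟨h _ _ hab.1, hab.2⟩

theorem IsDicolouring.swap (hα : IsDicolouring D k α) : IsDicolouring (Function.swap D) k α :=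
  fun c => (hα c).swap.mono fun _ _ hab => ⟨hab.1, hab.2.2, hab.2.1⟩

theorem IsDicolouring.inducedOn_congr {S : Set V} (hα : IsDicolouring (inducedOn D S) k α)
    (h : Set.EqOn α β S) : IsDicolouring (inducedOn D S) k β := by
  refine fun c => (hα c).mono ?_
  rintro a b ⟨hab, ha, hb⟩
  exact ⟨hab, (h hab.2.1).trans ha, (h hab.2.2).trans hb⟩

theorem IsDicolouring.of_inducedOn_compl (hα : IsDicolouring (inducedOn D {v}ᶜ) k α)
    (hv : ∀ w, D v w → α w ≠ α v) : IsDicolouring D k α := by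
  intro c
  refine RelAcyclic.of_inducedOn_compl_of_sink (v := v) ((hα c).mono ?_) ?_
  · rintro a b ⟨⟨hab, hac, hbc⟩, ha, hb⟩
    exact ⟨⟨hab, ha, hb⟩, hac, hbc⟩
  · rintro w ⟨hvw, hvc, hwc⟩
    exact hv w hvw (hwc.trans hvc.symm)

end Dicolouring

section Recolouring

variable {V : Type} {D : V → V → Prop} {k : ℕ} {α γ δ : V → Fin k} {v w : V}

theorem reflTransGen_recolStep_of_eqOn_compl (hγ : IsDicolouring D k γ)
    (hδ : IsDicolouring D k δ) (h : Set.EqOn γ δ {v}ᶜ) :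
    Relation.ReflTransGen (RecolStep D k) γ δ := by
  by_cases hv : γ v = δ v
  · obtain rfl : γ = δ := by
      funext x
      by_cases hx : x = v
      · exact hx ▸ hv
      · exact h hx
    exact .refl
  · exact .single ⟨hγ, hδ, v, hv, fun _ => @h _⟩

theorem mixing_of_forall_not [Finite V] (hD : ∀ a b, ¬ D a b) : Mixing D k := by
  classical
  cases nonempty_fintype V
  intro α β _ _
  have recolour_on (s : Finset V) :
      Relation.ReflTransGen (RecolStep D k) α (s.piecewise β α) := by
    induction s using Finset.induction_on with
    | empty => rw [Finset.piecewise_empty]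
    | insert v s _ ih =>
      rw [Finset.piecewise_insert]
      exact ih.trans <| reflTransGen_recolStep_of_eqOn_compl (v := v)
        (isDicolouring_of_forall_not hD _) (isDicolouring_of_forall_not hD _)
        fun _ hx => (Function.update_of_ne hx _ _).symm
  simpa only [Finset.piecewise_univ] using recolour_on Finset.univ

theorem exists_isDicolouring_update_of_not_arc [DecidableEq V] (hv : ¬ D v v)
    (hvw : ¬ D v w) (hdeg : {x | D v x}.encard < k)
    (hγ : IsDicolouring (inducedOn D {v}ᶜ) k γ)
    (hδ : IsDicolouring (inducedOn D {v}ᶜ) k δ) (hγδ : Set.EqOn γ δ {w}ᶜ) :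
    ∃ c, IsDicolouring D k (Function.update γ v c) ∧
      IsDicolouring D k (Function.update δ v c) := by
  obtain ⟨c, hc⟩ := exists_notMem_image_of_encard_lt γ (s := {x | D v x}) (by simpa using hdeg)
  have extend {ε : V → Fin k} (hε : IsDicolouring (inducedOn D {v}ᶜ) k ε)
      (hεγ : ∀ x, D v x → ε x = γ x) : IsDicolouring D k (Function.update ε v c) := by
    refine (hε.inducedOn_congr fun x hx => (Function.update_of_ne hx _ _).symm).of_inducedOn_compl
      fun x hvx => ?_
    have hxv : x ≠ v := fun h => hv (h ▸ hvx)
    rw [Function.update_of_ne hxv, Function.update_self, hεγ x hvx]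
    exact fun h => hc ⟨x, hvx, h⟩
  exact ⟨c, extend hγ fun _ _ => rfl,
    extend hδ fun x hvx => (hγδ fun h : x = w => hvw (h ▸ hvx)).symm⟩

theorem exists_isDicolouring_update [DecidableEq V] (hD : Oriented D)
    (hout : {x | D v x}.encard < k) (hin : {x | D x v}.encard < k)
    (hγ : IsDicolouring (inducedOn D {v}ᶜ) k γ)
    (hδ : IsDicolouring (inducedOn D {v}ᶜ) k δ) (hγδ : Set.EqOn γ δ {w}ᶜ) :
    ∃ c, IsDicolouring D k (Function.update γ v c) ∧
      IsDicolouring D k (Function.update δ v c) := by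
  by_cases hvw : D v w
  · have reverse {ε : V → Fin k} (hε : IsDicolouring (inducedOn D {v}ᶜ) k ε) :
        IsDicolouring (inducedOn (Function.swap D) {v}ᶜ) k ε :=
      hε.swap.mono fun _ _ h => ⟨h.1, h.2.2, h.2.1⟩
    obtain ⟨c, hγc, hδc⟩ := exists_isDicolouring_update_of_not_arc (D := Function.swap D)
      (hD.irrefl v) (hD v w hvw) hin (reverse hγ) (reverse hδ) hγδ
    exact ⟨c, hγc.swap, hδc.swap⟩
  · exact exists_isDicolouring_update_of_not_arc (hD.irrefl v) hvw hout hγ hδ hγδ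

theorem RecolStep.exists_lift {γ' : V → Fin k} (hD : Oriented D)
    (hout : {x | D v x}.encard < k) (hin : {x | D x v}.encard < k)
    (hγδ : RecolStep (inducedOn D {v}ᶜ) k γ δ) (hγ' : IsDicolouring D k γ')
    (hγ'γ : Set.EqOn γ' γ {v}ᶜ) :
    ∃ δ', Relation.ReflTransGen (RecolStep D k) γ' δ' ∧ IsDicolouring D k δ' ∧
      Set.EqOn δ' δ {v}ᶜ := by
  classical
  obtain ⟨hγ, hδ, w, -, hw⟩ := hγδ
  obtain ⟨c, hγc, hδc⟩ := exists_isDicolouring_update hD hout hin hγ hδ hw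
  refine ⟨Function.update δ v c, ?_, hδc, fun x hx => Function.update_of_ne hx _ _⟩
  have recolour_v : Relation.ReflTransGen (RecolStep D k) γ' (Function.update γ v c) :=
    reflTransGen_recolStep_of_eqOn_compl hγ' hγc
      fun x hx => (hγ'γ hx).trans (Function.update_of_ne hx _ _).symm
  have recolour_w : Relation.ReflTransGen (RecolStep D k)
      (Function.update γ v c) (Function.update δ v c) := by
    refine reflTransGen_recolStep_of_eqOn_compl (v := w) hγc hδc fun x hx => ?_
    simp only [Function.update_apply, hw x hx]
  exact recolour_v.trans recolour_w

theorem exists_lift_of_reflTransGen (hD : Oriented D) (hout : {x | D v x}.encard < k)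
    (hin : {x | D x v}.encard < k) (hα : IsDicolouring D k α)
    (hαγ : Relation.ReflTransGen (RecolStep (inducedOn D {v}ᶜ) k) α γ) :
    ∃ γ', Relation.ReflTransGen (RecolStep D k) α γ' ∧ IsDicolouring D k γ' ∧
      Set.EqOn γ' γ {v}ᶜ := by
  induction hαγ with
  | refl => exact ⟨α, .refl, hα, Set.eqOn_refl _ _⟩
  | tail _ hγδ ih =>
    obtain ⟨γ', hαγ', hγ', hγ'γ⟩ := ih
    obtain ⟨δ', hγ'δ', hδ', hδ'δ⟩ := hγδ.exists_lift hD hout hin hγ' hγ'γ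
    exact ⟨δ', hαγ'.trans hγ'δ', hδ', hδ'δ⟩

end Recolouring

section Mixing

variable {V : Type} {D : V → V → Prop} {k : ℕ}

theorem Mixing.of_inducedOn_compl {v : V} (h : Mixing (inducedOn D {v}ᶜ) k) (hD : Oriented D)
    (hout : {x | D v x}.encard < k) (hin : {x | D x v}.encard < k) : Mixing D k := by
  intro α β hα hβ
  have hαβ := h α β (hα.mono (inducedOn_le _)) (hβ.mono (inducedOn_le _))
  obtain ⟨β', hαβ', hβ', hβ'β⟩ := exists_lift_of_reflTransGen hD hout hin hα hαβ
  exact hαβ'.trans (reflTransGen_recolStep_of_eqOn_compl hβ' hβ hβ'β)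

theorem mixing_inducedOn [Finite V] (hD : Oriented D)
    (hdeg : ∀ S : Set V, S.Nonempty → ∃ v ∈ S, outDegOn D S v < k ∧ inDegOn D S v < k)
    (S : Set V) : Mixing (inducedOn D S) k := by
  induction S using WellFoundedLT.induction with
  | ind S ih =>
  obtain rfl | hS := S.eq_empty_or_nonempty
  · exact mixing_of_forall_not fun _ _ h => h.2.1
  obtain ⟨v, hvS, hout, hin⟩ := hdeg S hS
  have encard_lt {N T : Set V} (hT : T.ncard < k) (hNT : N ⊆ T) : N.encard < k := by
    refine (Set.encard_le_encard hNT).trans_lt ?_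
    rwa [← T.toFinite.cast_ncard_eq, Nat.cast_lt]
  have hrest : Mixing (inducedOn (inducedOn D S) {v}ᶜ) k := by
    rw [inducedOn_inducedOn]
    exact ih _ (Set.sdiff_singleton_ssubset.2 hvS)
  exact hrest.of_inducedOn_compl (hD.inducedOn S)
    (encard_lt hout fun _ h => ⟨h.2.2, h.1⟩) (encard_lt hin fun _ h => ⟨h.2.1, h.1⟩)

end Mixing

/-- Every oriented graph is `k`-mixing for every `k ≥ δ*_max + 1`, where the
max-degeneracy `δ*_max` is the least `d` such that every nonempty subdigraph
has a vertex `v` with `max (d⁺ v) (d⁻ v) ≤ d`. -/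
theorem max_degeneracy_mixing {V : Type} [Fintype V] (D : V → V → Prop)
    (horiented : Oriented D) (d k : ℕ)
    (hd : ∀ S : Set V, S.Nonempty → ∃ v ∈ S, max (outDegOn D S v) (inDegOn D S v) ≤ d)
    (hk : d + 1 ≤ k) :
    Mixing D k := by
  have hdeg : ∀ S : Set V, S.Nonempty → ∃ v ∈ S, outDegOn D S v < k ∧ inDegOn D S v < k := by
    intro S hS
    obtain ⟨v, hvS, hv⟩ := hd S hS
    exact ⟨v, hvS, by omega, by omega⟩
  simpa only [inducedOn_univ] using mixing_inducedOn horiented hdeg Set.univ
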